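/- arXiv:hep-th/9201026 — 7 statements merged into one kernel-verified Lean document; each statement's English description precedes it below -/
import Mathlib

section
/- Orthonormality of the moving frame (Proposition, Eq. (2.2.18)): for all z, w ∈ ℂ and all 0 ≤ ℓ, ℓ' ≤ n, ⟨ṽ_ℓ(z,w), v̄_{ℓ'}(z,w)⟩ = τ_ℓ(z,w) · τ_{ℓ+1}(z,w) · δ_{ℓ ℓ'}. In particular the rescaled frame vectors ẽ_ℓ = ṽ_ℓ/√(τ_ℓτ_{ℓ+1}) and ē_ℓ = v̄_ℓ/√(τ_ℓτ_{ℓ+1}) are orthonormal wherever the τ's are nonzero. -/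
open scoped BigOperators

/-- Componentwise `i`-th iterated complex derivative of an embedding function. -/
noncomputable def Dv (n : ℕ) (f : ℂ → Fin (n + 1) → ℂ) (i : ℕ) (z : ℂ)
    (A : Fin (n + 1)) : ℂ :=
  iteratedDeriv i (fun t => f t A) z

/-- The matrix η(z,w)_{i j} = ∑_A f^{(i)}_A(z) g^{(j)}_A(w). -/
noncomputable def etaM (n : ℕ) (f g : ℂ → Fin (n + 1) → ℂ) (z w : ℂ) :
    Matrix (Fin (n + 1)) (Fin (n + 1)) ℂ :=
  Matrix.of fun i j => ∑ A, Dv n f (i : ℕ) z A * Dv n g (j : ℕ) w A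

/-- τ_ℓ(z,w): the leading ℓ×ℓ principal minor of η(z,w) (τ_0 = 1). -/
noncomputable def tauF (n : ℕ) (f g : ℂ → Fin (n + 1) → ℂ) (ℓ : ℕ) (z w : ℂ) : ℂ :=
  Matrix.det (Matrix.of fun i j : Fin ℓ => ∑ A, Dv n f (i : ℕ) z A * Dv n g (j : ℕ) w A)

/-- The A-th component of the vector ṽ_ℓ(z,w). -/
noncomputable def vtil (n : ℕ) (f g : ℂ → Fin (n + 1) → ℂ) (ℓ : ℕ) (z w : ℂ)
    (A : Fin (n + 1)) : ℂ :=
  Matrix.det (Matrix.of fun j i : Fin (ℓ + 1) =>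
    if (j : ℕ) < ℓ then ∑ B, Dv n f (i : ℕ) z B * Dv n g (j : ℕ) w B
    else Dv n f (i : ℕ) z A)

/-- The A-th component of the vector v̄_ℓ(z,w). -/
noncomputable def vbar (n : ℕ) (f g : ℂ → Fin (n + 1) → ℂ) (ℓ : ℕ) (z w : ℂ)
    (A : Fin (n + 1)) : ℂ :=
  Matrix.det (Matrix.of fun i j : Fin (ℓ + 1) =>
    if (i : ℕ) < ℓ then ∑ B, Dv n f (i : ℕ) z B * Dv n g (j : ℕ) w B
    else Dv n g (j : ℕ) w A)

/-!
The vectors `ṽ_ℓ` and `v̄_ℓ` are the outcome of a determinantal Gram–Schmidt process applied to the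
derivatives of `f` and `g`. Pairing `ṽ_ℓ` with `g^{(j)}` replaces the last row of its determinant by
the `j`-th column of `η`: this gives a repeated row if `j < ℓ`, and the minor `τ_{ℓ+1}` if `j = ℓ`.
On the other hand `v̄_m` is `τ_m g^{(m)}` plus a combination of lower derivatives of `g`. Hence the
pairing of `ṽ_ℓ` with `v̄_m` vanishes for `m < ℓ` and is `τ_ℓ τ_{ℓ+1}` for `m = ℓ`; the case `m > ℓ`
follows by exchanging the two sides.
-/

section DetGramSchmidt

variable {R V W : Type*} [CommRing R] [AddCommMonoid V] [AddCommMonoid W]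
  [Module R V] [Module R W]

/-- The `ℓ`-th leading principal minor of the Gram matrix `B (v i) (w j)` of two sequences of
vectors under a bilinear pairing; it specialises to `τ_ℓ`. -/
def gramMinor (B : V →ₗ[R] W →ₗ[R] R) (v : ℕ → V) (w : ℕ → W) (ℓ : ℕ) : R :=
  Matrix.det (Matrix.of fun i j : Fin ℓ => B (v i) (w j))

/-- The `ℓ`-th vector of the unnormalised determinantal Gram–Schmidt process applied to `w`: the
formal `(ℓ + 1) × (ℓ + 1)` determinant with rows `B (v i) (w 0), …, B (v i) (w ℓ)` for `i < ℓ` and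
last row the vectors `w 0, …, w ℓ`. As its last row is not scalar, it is defined by its cofactor
expansion along that row. It specialises to `v̄_ℓ`, and to `ṽ_ℓ` when the two sequences are
exchanged. -/
def detGramSchmidt (B : V →ₗ[R] W →ₗ[R] R) (v : ℕ → V) (w : ℕ → W) (ℓ : ℕ) : W :=
  ∑ j : Fin (ℓ + 1),
    ((-1) ^ (ℓ + (j : ℕ)) *
      Matrix.det (Matrix.of fun i k : Fin ℓ => B (v i) (w (j.succAbove k)))) • w j

variable (B : V →ₗ[R] W →ₗ[R] R) (v : ℕ → V) (w : ℕ → W)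

lemma gramMinor_flip (ℓ : ℕ) : gramMinor B.flip w v ℓ = gramMinor B v w ℓ :=
  Matrix.det_transpose _

lemma map_detGramSchmidt_eq_det (φ : W →ₗ[R] R) (ℓ : ℕ) :
    φ (detGramSchmidt B v w ℓ) =
      Matrix.det (Matrix.of fun i j : Fin (ℓ + 1) =>
        if (i : ℕ) < ℓ then B (v i) (w j) else φ (w j)) := by
  rw [Matrix.det_succ_row _ (Fin.last ℓ), detGramSchmidt, map_sum]
  refine Finset.sum_congr rfl fun j _ => ?_
  have minor_eq : (Matrix.of fun i j : Fin (ℓ + 1) =>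
        if (i : ℕ) < ℓ then B (v i) (w j) else φ (w j)).submatrix
          (Fin.last ℓ).succAbove j.succAbove =
      Matrix.of fun i k : Fin ℓ => B (v i) (w (j.succAbove k)) := by
    ext i k
    simp
  rw [minor_eq, map_smul, smul_eq_mul, mul_right_comm]
  simp

lemma map_detGramSchmidt_of_forall_lt {φ : W →ₗ[R] R} {ℓ : ℕ}
    (hφ : ∀ j < ℓ, φ (w j) = 0) :
    φ (detGramSchmidt B v w ℓ) = gramMinor B v w ℓ * φ (w ℓ) := by
  have sign : (-1 : R) ^ (ℓ + ℓ) = 1 := (Even.add_self ℓ).neg_one_pow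
  simp [detGramSchmidt, gramMinor, Fin.sum_univ_castSucc, hφ, sign]

lemma pairing_detGramSchmidt_of_lt {i ℓ : ℕ} (hi : i < ℓ) :
    B (v i) (detGramSchmidt B v w ℓ) = 0 := by
  rw [map_detGramSchmidt_eq_det]
  refine Matrix.det_zero_of_row_eq (i := (⟨i, hi⟩ : Fin ℓ).castSucc) (j := Fin.last ℓ)
    (Fin.castSucc_lt_last _).ne ?_
  ext j
  simp [hi]

lemma pairing_detGramSchmidt_self (ℓ : ℕ) :
    B (v ℓ) (detGramSchmidt B v w ℓ) = gramMinor B v w (ℓ + 1) := by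
  rw [map_detGramSchmidt_eq_det, gramMinor]
  congr 1
  ext i j
  rcases i.eq_castSucc_or_eq_last with ⟨k, rfl⟩ | rfl <;> simp

lemma pairing_detGramSchmidt_detGramSchmidt_of_lt {m ℓ : ℕ} (hm : m < ℓ) :
    B (detGramSchmidt B.flip w v ℓ) (detGramSchmidt B v w m) = 0 := by
  have orthogonal : ∀ j < ℓ, B (detGramSchmidt B.flip w v ℓ) (w j) = 0 :=
    fun _ hj => pairing_detGramSchmidt_of_lt B.flip w v hj
  rw [map_detGramSchmidt_of_forall_lt B v w fun j hj => orthogonal j (hj.trans hm),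
    orthogonal m hm, mul_zero]

lemma pairing_detGramSchmidt_detGramSchmidt_self (ℓ : ℕ) :
    B (detGramSchmidt B.flip w v ℓ) (detGramSchmidt B v w ℓ) =
      gramMinor B v w ℓ * gramMinor B v w (ℓ + 1) := by
  rw [map_detGramSchmidt_of_forall_lt B v w fun _ hj =>
      pairing_detGramSchmidt_of_lt B.flip w v hj,
    ← gramMinor_flip B v w (ℓ + 1), ← pairing_detGramSchmidt_self B.flip w v, B.flip_apply]

theorem stmt1_general (ℓ m : ℕ) :
    B (detGramSchmidt B.flip w v ℓ) (detGramSchmidt B v w m) =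
      gramMinor B v w ℓ * gramMinor B v w (ℓ + 1) * (if ℓ = m then 1 else 0) := by
  rcases lt_trichotomy m ℓ with hlt | rfl | hgt
  · rw [pairing_detGramSchmidt_detGramSchmidt_of_lt B v w hlt, if_neg hlt.ne', mul_zero]
  · rw [pairing_detGramSchmidt_detGramSchmidt_self, if_pos rfl, mul_one]
  · rw [if_neg hgt.ne, mul_zero]
    exact pairing_detGramSchmidt_detGramSchmidt_of_lt B.flip w v hgt

end DetGramSchmidt

section MovingFrame

variable (n : ℕ) (f g : ℂ → Fin (n + 1) → ℂ) (z w : ℂ) (ℓ : ℕ)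

lemma tauF_eq_gramMinor :
    tauF n f g ℓ z w =
      gramMinor (dotProductBilin ℂ ℂ) (fun i => Dv n f i z) (fun j => Dv n g j w) ℓ :=
  rfl

lemma vbar_eq_detGramSchmidt :
    vbar n f g ℓ z w =
      detGramSchmidt (dotProductBilin ℂ ℂ) (fun i => Dv n f i z) (fun j => Dv n g j w) ℓ :=
  funext fun A => (map_detGramSchmidt_eq_det (dotProductBilin ℂ ℂ)
    (fun i => Dv n f i z) (fun j => Dv n g j w) (LinearMap.proj A) ℓ).symm

lemma vtil_eq_detGramSchmidt :
    vtil n f g ℓ z w =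
      detGramSchmidt (dotProductBilin ℂ ℂ).flip
        (fun j => Dv n g j w) (fun i => Dv n f i z) ℓ :=
  funext fun A => (map_detGramSchmidt_eq_det (dotProductBilin ℂ ℂ).flip
    (fun j => Dv n g j w) (fun i => Dv n f i z) (LinearMap.proj A) ℓ).symm

end MovingFrame

/-- orthonormality of the moving frame (Eq. 2.2.18):
⟨ṽ_ℓ, v̄_{ℓ'}⟩ = τ_ℓ τ_{ℓ+1} δ_{ℓ ℓ'}. -/
theorem stmt1 (n : ℕ) (f g : ℂ → Fin (n + 1) → ℂ)
    (hf : ∀ A, Differentiable ℂ fun z => f z A)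
    (hg : ∀ A, Differentiable ℂ fun z => g z A) :
    ∀ (z w : ℂ) (ℓ ℓ' : ℕ), ℓ ≤ n → ℓ' ≤ n →
      ∑ A, vtil n f g ℓ z w A * vbar n f g ℓ' z w A
        = tauF n f g ℓ z w * tauF n f g (ℓ + 1) z w * (if ℓ = ℓ' then 1 else 0) := by
  intro z w ℓ ℓ' _ _
  rw [vtil_eq_detGramSchmidt, vbar_eq_detGramSchmidt, tauF_eq_gramMinor, tauF_eq_gramMinor]
  exact stmt1_general (dotProductBilin ℂ ℂ) (fun i => Dv n f i z) (fun j => Dv n g j w) ℓ ℓ'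
end

section
/- Covariance under local rescaling (Theorem): let ρ, σ : ℂ → ℂ be entire, and let f̃(z) = ρ(z)·f(z) and g̃(w) = σ(w)·g(w) (componentwise products). Denote by τ̃_ℓ, ṽ̃_ℓ, v̄̃_ℓ the quantities built from f̃, g̃ exactly as τ_ℓ, ṽ_ℓ, v̄_ℓ are built from f, g. Then for all z, w ∈ ℂ: τ̃_ℓ(z,w) = ρ(z)^ℓ · σ(w)^ℓ · τ_ℓ(z,w) for 0 ≤ ℓ ≤ n+1, and ṽ̃_ℓ(z,w) = ρ(z)^{ℓ+1} σ(w)^ℓ · ṽ_ℓ(z,w), v̄̃_ℓ(z,w) = σ(w)^{ℓ+1} ρ(z)^ℓ · v̄_ℓ(z,w) for 0 ≤ ℓ ≤ n. -/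
open scoped BigOperators

/-!
By the Leibniz rule, replacing `f` by `ρ f` multiplies the matrix of derivatives of `f` on the left
by a lower triangular matrix with constant diagonal `ρ`. Each of the determinants in question is a
product of such derivative matrices, bordered in the case of `vtil` by one further row, so it only
picks up the powers of `ρ` and `σ` given by the determinants of the triangular matrices.
-/

open scoped Matrix

section SnocRow

variable {R κ μ : Type*} {m : ℕ}

/-- The matrix `M` with the row `r` adjoined at the bottom; the matrices defining `vtil` and `vbar`
are of this form. -/
def snocRow (M : Matrix (Fin m) κ R) (r : κ → R) : Matrix (Fin (m + 1)) κ R :=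
  Matrix.of (Fin.snoc (α := fun _ => κ → R) M r)

@[simp]
lemma snocRow_castSucc (M : Matrix (Fin m) κ R) (r : κ → R) (i : Fin m) :
    snocRow M r i.castSucc = M i :=
  Fin.snoc_castSucc (α := fun _ => κ → R) r M i

@[simp]
lemma snocRow_last (M : Matrix (Fin m) κ R) (r : κ → R) : snocRow M r (Fin.last m) = r :=
  Fin.snoc_last (α := fun _ => κ → R) r M

lemma snocRow_mul [Fintype κ] [NonUnitalNonAssocSemiring R] (M : Matrix (Fin m) κ R) (r : κ → R)
    (N : Matrix κ μ R) : snocRow M r * N = snocRow (M * N) (r ᵥ* N) := by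
  ext i j
  cases i using Fin.lastCases <;> simp [Matrix.mul_apply, Matrix.vecMul, dotProduct]

lemma det_snocRow_mul [CommRing R] (L : Matrix (Fin m) (Fin m) R)
    (M : Matrix (Fin m) (Fin (m + 1)) R) (r : Fin (m + 1) → R) :
    (snocRow (L * M) r).det = L.det * (snocRow M r).det := by
  have minor (N : Matrix (Fin m) (Fin (m + 1)) R) (j : Fin (m + 1)) :
      (snocRow N r).submatrix (Fin.last m).succAbove j.succAbove =
        N.submatrix id j.succAbove := by
    ext i k
    simp
  have minor_mul (j : Fin (m + 1)) :
      (L * M).submatrix id j.succAbove = L * M.submatrix id j.succAbove := rfl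
  rw [Matrix.det_succ_row _ (Fin.last m), Matrix.det_succ_row _ (Fin.last m), Finset.mul_sum]
  refine Finset.sum_congr rfl fun j _ => ?_
  rw [minor, minor, minor_mul, Matrix.det_mul, snocRow_last, snocRow_last]
  ring

end SnocRow

section Leibniz

variable {𝕜 E 𝔸 ι : Type*} [NontriviallyNormedField 𝕜] [NormedAddCommGroup E] [NormedSpace 𝕜 E]
  [NormedCommRing 𝔸] [NormedAlgebra 𝕜 𝔸]

/-- The matrix whose `i`-th row is the `i`-th derivative of `f` at `z`, for `i < m`; it factors
`η` as the product of the derivative matrices of the chiral and anti-chiral embeddings. -/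
noncomputable def jetMatrix (m : ℕ) (f : 𝕜 → ι → E) (z : 𝕜) : Matrix (Fin m) ι E :=
  Matrix.of fun i A => iteratedDeriv i (fun t => f t A) z

/-- The matrix of the Leibniz rule: the action of multiplication by `ρ` on the derivatives of
order less than `m` at `z`. -/
noncomputable def leibnizMatrix (m : ℕ) (ρ : 𝕜 → 𝔸) (z : 𝕜) : Matrix (Fin m) (Fin m) 𝔸 :=
  -- The truncation of `i - k` for `i < k` is harmless: the binomial coefficient vanishes there.
  Matrix.of fun i k => (i : ℕ).choose k * iteratedDeriv (i - k : ℕ) ρ z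

lemma leibnizMatrix_isLowerTriangular (m : ℕ) (ρ : 𝕜 → 𝔸) (z : 𝕜) :
    (leibnizMatrix m ρ z).IsLowerTriangular := by
  intro i k (hik : i < k)
  simp [leibnizMatrix, Nat.choose_eq_zero_of_lt hik]

lemma det_leibnizMatrix (m : ℕ) (ρ : 𝕜 → 𝔸) (z : 𝕜) : (leibnizMatrix m ρ z).det = ρ z ^ m := by
  rw [Matrix.det_of_isLowerTriangular _ (leibnizMatrix_isLowerTriangular m ρ z)]
  simp [leibnizMatrix]

lemma iteratedDeriv_mul_eq_sum_leibnizMatrix {m : ℕ} (i : Fin m) {ρ h : 𝕜 → 𝔸} {z : 𝕜}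
    (hρ : ContDiffAt 𝕜 i ρ z) (hh : ContDiffAt 𝕜 i h z) :
    iteratedDeriv i (fun t => ρ t * h t) z =
      ∑ k : Fin m, leibnizMatrix m ρ z i k * iteratedDeriv k h z := by
  let term (k : ℕ) : 𝔸 := (i : ℕ).choose k * iteratedDeriv (i - k : ℕ) ρ z * iteratedDeriv k h z
  calc iteratedDeriv i (fun t => ρ t * h t) z
      = ∑ k ∈ Finset.range (i + 1), term k := by
        simp_rw [mul_comm (ρ _), iteratedDeriv_fun_mul hh hρ, term, mul_right_comm]
    _ = ∑ k ∈ Finset.range m, term k := by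
        refine Finset.sum_subset (Finset.range_mono i.isLt) fun k _ hk => ?_
        have hik : (i : ℕ) < k := by simpa [Nat.lt_succ_iff] using hk
        simp [term, Nat.choose_eq_zero_of_lt hik]
    _ = ∑ k : Fin m, leibnizMatrix m ρ z i k * iteratedDeriv k h z :=
        (Fin.sum_univ_eq_sum_range term m).symm

lemma jetMatrix_mul {m : ℕ} {ρ : 𝕜 → 𝔸} {f : 𝕜 → ι → 𝔸} {z : 𝕜}
    (hρ : ContDiffAt 𝕜 (m - 1 : ℕ) ρ z) (hf : ∀ A, ContDiffAt 𝕜 (m - 1 : ℕ) (fun t => f t A) z) :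
    jetMatrix m (fun t A => ρ t * f t A) z = leibnizMatrix m ρ z * jetMatrix m f z := by
  ext i A
  have hi : ((i : ℕ) : WithTop ℕ∞) ≤ (m - 1 : ℕ) := by exact_mod_cast Nat.le_sub_one_of_lt i.isLt
  exact iteratedDeriv_mul_eq_sum_leibnizMatrix i (hρ.of_le hi) ((hf A).of_le hi)

end Leibniz

section Covariance

variable (n : ℕ) (f g : ℂ → Fin (n + 1) → ℂ) (ℓ : ℕ) (z w : ℂ) (A : Fin (n + 1))

lemma tauF_eq_det_jetMatrix_mul :
    tauF n f g ℓ z w = (jetMatrix ℓ f z * (jetMatrix ℓ g w)ᵀ).det :=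
  rfl

lemma vtil_eq_det_snocRow :
    vtil n f g ℓ z w A =
      (snocRow (jetMatrix ℓ g w * (jetMatrix (ℓ + 1) f z)ᵀ)
        ((jetMatrix (ℓ + 1) f z)ᵀ A)).det := by
  unfold vtil
  congr 1
  ext j i
  cases j using Fin.lastCases <;> simp [Matrix.mul_apply, jetMatrix, Dv, mul_comm]

lemma vbar_eq_vtil_swap : vbar n f g ℓ z w A = vtil n g f ℓ w z A := by
  simp only [vbar, vtil, mul_comm]

variable {n f g z w} {ρ σ : ℂ → ℂ}

lemma tauF_mul (hf : ∀ A, AnalyticAt ℂ (fun t => f t A) z)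
    (hg : ∀ A, AnalyticAt ℂ (fun t => g t A) w) (hρ : AnalyticAt ℂ ρ z) (hσ : AnalyticAt ℂ σ w) :
    tauF n (fun t A => ρ t * f t A) (fun t A => σ t * g t A) ℓ z w =
      ρ z ^ ℓ * σ w ^ ℓ * tauF n f g ℓ z w := by
  let F := jetMatrix ℓ f z
  let G := jetMatrix ℓ g w
  let P := leibnizMatrix ℓ ρ z
  let Q := leibnizMatrix ℓ σ w
  calc tauF n (fun t A => ρ t * f t A) (fun t A => σ t * g t A) ℓ z w
      = (P * F * (Q * G)ᵀ).det := by
        rw [tauF_eq_det_jetMatrix_mul, jetMatrix_mul hρ.contDiffAt fun A => (hf A).contDiffAt,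
          jetMatrix_mul hσ.contDiffAt fun A => (hg A).contDiffAt]
    _ = (P * (F * Gᵀ) * Qᵀ).det := by simp only [Matrix.transpose_mul, Matrix.mul_assoc]
    _ = P.det * (F * Gᵀ).det * Q.det := by rw [Matrix.det_mul, Matrix.det_mul, Matrix.det_transpose]
    _ = ρ z ^ ℓ * σ w ^ ℓ * tauF n f g ℓ z w := by
        rw [det_leibnizMatrix, det_leibnizMatrix, tauF_eq_det_jetMatrix_mul]
        ring

lemma vtil_mul (hf : ∀ A, AnalyticAt ℂ (fun t => f t A) z)
    (hg : ∀ A, AnalyticAt ℂ (fun t => g t A) w) (hρ : AnalyticAt ℂ ρ z) (hσ : AnalyticAt ℂ σ w) :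
    vtil n (fun t A => ρ t * f t A) (fun t A => σ t * g t A) ℓ z w A =
      ρ z ^ (ℓ + 1) * σ w ^ ℓ * vtil n f g ℓ z w A := by
  let F := jetMatrix (ℓ + 1) f z
  let G := jetMatrix ℓ g w
  let P := leibnizMatrix (ℓ + 1) ρ z
  let Q := leibnizMatrix ℓ σ w
  have last_row : (P * F)ᵀ A = Fᵀ A ᵥ* Pᵀ := by
    rw [Matrix.transpose_mul]
    rfl
  calc vtil n (fun t A => ρ t * f t A) (fun t A => σ t * g t A) ℓ z w A
      = (snocRow (Q * G * (P * F)ᵀ) ((P * F)ᵀ A)).det := by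
        rw [vtil_eq_det_snocRow, jetMatrix_mul hρ.contDiffAt fun A => (hf A).contDiffAt,
          jetMatrix_mul hσ.contDiffAt fun A => (hg A).contDiffAt]
    _ = (snocRow (Q * (G * Fᵀ)) (Fᵀ A) * Pᵀ).det := by
        rw [snocRow_mul, last_row]
        simp only [Matrix.transpose_mul, Matrix.mul_assoc]
    _ = Q.det * (snocRow (G * Fᵀ) (Fᵀ A)).det * P.det := by
        rw [Matrix.det_mul, det_snocRow_mul, Matrix.det_transpose]
    _ = ρ z ^ (ℓ + 1) * σ w ^ ℓ * vtil n f g ℓ z w A := by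
        rw [det_leibnizMatrix, det_leibnizMatrix, vtil_eq_det_snocRow]
        ring

lemma vbar_mul (hf : ∀ A, AnalyticAt ℂ (fun t => f t A) z)
    (hg : ∀ A, AnalyticAt ℂ (fun t => g t A) w) (hρ : AnalyticAt ℂ ρ z) (hσ : AnalyticAt ℂ σ w) :
    vbar n (fun t A => ρ t * f t A) (fun t A => σ t * g t A) ℓ z w A =
      σ w ^ (ℓ + 1) * ρ z ^ ℓ * vbar n f g ℓ z w A := by
  simp only [vbar_eq_vtil_swap, vtil_mul ℓ A hg hf hσ hρ]

end Covariance

theorem stmt2_general (n : ℕ) (f g : ℂ → Fin (n + 1) → ℂ) (ρ σ : ℂ → ℂ) (z w : ℂ)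
    (hf : ∀ A, AnalyticAt ℂ (fun t => f t A) z) (hg : ∀ A, AnalyticAt ℂ (fun t => g t A) w)
    (hρ : AnalyticAt ℂ ρ z) (hσ : AnalyticAt ℂ σ w) (ℓ : ℕ) :
    tauF n (fun z A => ρ z * f z A) (fun w A => σ w * g w A) ℓ z w
        = ρ z ^ ℓ * σ w ^ ℓ * tauF n f g ℓ z w ∧
      (∀ A, vtil n (fun z A => ρ z * f z A) (fun w A => σ w * g w A) ℓ z w A
        = ρ z ^ (ℓ + 1) * σ w ^ ℓ * vtil n f g ℓ z w A) ∧
      (∀ A, vbar n (fun z A => ρ z * f z A) (fun w A => σ w * g w A) ℓ z w A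
        = σ w ^ (ℓ + 1) * ρ z ^ ℓ * vbar n f g ℓ z w A) :=
  ⟨tauF_mul ℓ hf hg hρ hσ, fun A => vtil_mul ℓ A hf hg hρ hσ, fun A => vbar_mul ℓ A hf hg hρ hσ⟩

/-- covariance under local rescaling f̃ = ρ·f, g̃ = σ·g:
τ̃_ℓ = ρ^ℓ σ^ℓ τ_ℓ (0 ≤ ℓ ≤ n+1), ṽ̃_ℓ = ρ^{ℓ+1} σ^ℓ ṽ_ℓ and v̄̃_ℓ = σ^{ℓ+1} ρ^ℓ v̄_ℓ
(0 ≤ ℓ ≤ n). -/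
theorem stmt2 (n : ℕ) (f g : ℂ → Fin (n + 1) → ℂ) (ρ σ : ℂ → ℂ)
    (hf : ∀ A, Differentiable ℂ fun z => f z A)
    (hg : ∀ A, Differentiable ℂ fun z => g z A)
    (hρ : Differentiable ℂ ρ) (hσ : Differentiable ℂ σ) :
    ∀ z w : ℂ,
      (∀ ℓ : ℕ, ℓ ≤ n + 1 →
        tauF n (fun z A => ρ z * f z A) (fun w A => σ w * g w A) ℓ z w
          = ρ z ^ ℓ * σ w ^ ℓ * tauF n f g ℓ z w) ∧
      (∀ ℓ : ℕ, ℓ ≤ n →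
        (∀ A, vtil n (fun z A => ρ z * f z A) (fun w A => σ w * g w A) ℓ z w A
            = ρ z ^ (ℓ + 1) * σ w ^ ℓ * vtil n f g ℓ z w A) ∧
        (∀ A, vbar n (fun z A => ρ z * f z A) (fun w A => σ w * g w A) ℓ z w A
            = σ w ^ (ℓ + 1) * ρ z ^ ℓ * vbar n f g ℓ z w A)) := by
  intro z w
  have main := stmt2_general n f g ρ σ z w (fun A => (hf A).analyticAt z)
    (fun A => (hg A).analyticAt w) (hρ.analyticAt z) (hσ.analyticAt w)
  exact ⟨fun ℓ _ => (main ℓ).1, fun ℓ _ => (main ℓ).2⟩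
end

section
/- Conformally reduced WZNW solutions from W-surfaces (Theorem): suppose Ω ⊆ ℂ × ℂ is open and η(z,w) is invertible for every (z,w) ∈ Ω. Define the currents 𝒥(z,w) = −(∂_z η)(z,w) · η(z,w)⁻¹ and 𝒥̄(z,w) = −η(z,w)⁻¹ · (∂_w η)(z,w), where ∂_z and ∂_w denote entrywise partial derivatives. Then on Ω: (i) ∂_w 𝒥 = 0 and ∂_z 𝒥̄ = 0 (the currents are chiral, so θ = η⁻¹ solves the conformally reduced gl(n+1) WZNW equations ∂_w(θ⁻¹∂_zθ) = ∂_z((∂_wθ)θ⁻¹) = 0); (ii) for every 0 ≤ i ≤ n−1 and 0 ≤ j ≤ n, 𝒥(z,w)_{i j} = −δ_{j, i+1}, and for every 0 ≤ j ≤ n−1 and 0 ≤ k ≤ n, 𝒥̄(z,w)_{k j} = −δ_{k, j+1} (the constrained Drinfeld–Sokolov form of the currents). -/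
open scoped BigOperators

/-- The current 𝒥(z,w) = −(∂_z η)(z,w) · η(z,w)⁻¹. -/
noncomputable def Jcur (n : ℕ) (f g : ℂ → Fin (n + 1) → ℂ) (z w : ℂ) :
    Matrix (Fin (n + 1)) (Fin (n + 1)) ℂ :=
  -(Matrix.of fun i j => deriv (fun t => etaM n f g t w i j) z) * (etaM n f g z w)⁻¹

/-- The current 𝒥̄(z,w) = −η(z,w)⁻¹ · (∂_w η)(z,w). -/
noncomputable def Jbarcur (n : ℕ) (f g : ℂ → Fin (n + 1) → ℂ) (z w : ℂ) :
    Matrix (Fin (n + 1)) (Fin (n + 1)) ℂ :=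
  -((etaM n f g z w)⁻¹ * Matrix.of fun i j => deriv (fun t => etaM n f g z t i j) w)

/-
Factor η(z,w) = W_f(z) W_g(w)ᵀ into the two Wronskian matrices. The antichiral factor cancels in
𝒥 = -(∂_z η) η⁻¹ and leaves -W_f' W_f⁻¹, which depends on z alone. Each row of W_f' except the last
is the next row of W_f, so -W_f' W_f⁻¹ is minus a companion matrix. Exchanging the two chiralities
transposes η, which gives the statements about 𝒥̄.
-/

open scoped Matrix Topology

section Matrix

variable {m n α : Type*} [Fintype n] [DecidableEq n] [CommRing α]

theorem mul_mul_mul_inv_of_isUnit (A : Matrix m n α) (B : Matrix n n α) {C : Matrix n n α}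
    (hC : IsUnit C) : A * C * (B * C)⁻¹ = A * B⁻¹ := by
  rw [Matrix.isUnit_iff_isUnit_det] at hC
  rw [Matrix.mul_inv_rev, ← Matrix.mul_assoc, Matrix.mul_nonsing_inv_cancel_right C A hC]

theorem mul_inv_apply_of_row_eq {A : Matrix m n α} {B : Matrix n n α} (hB : IsUnit B) {i : m}
    {k : n} (hrow : A i = B k) (j : n) : (A * B⁻¹) i j = if j = k then 1 else 0 := by
  rw [Matrix.isUnit_iff_isUnit_det] at hB
  calc (A * B⁻¹) i j = (B * B⁻¹) k j := by simp only [Matrix.mul_apply_eq_vecMul, hrow]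
    _ = if j = k then 1 else 0 := by
        simp only [Matrix.mul_nonsing_inv B hB, Matrix.one_apply, eq_comm]

end Matrix

theorem eventually_isUnit_matrix {X n 𝕜 : Type*} [TopologicalSpace X] [Fintype n]
    [DecidableEq n] [Field 𝕜] [TopologicalSpace 𝕜] [IsTopologicalRing 𝕜] [T1Space 𝕜]
    {M : X → Matrix n n 𝕜} {x : X} (hM : ContinuousAt M x) (hx : IsUnit (M x)) :
    ∀ᶠ y in 𝓝 x, IsUnit (M y) := by
  simp only [Matrix.isUnit_iff_isUnit_det, isUnit_iff_ne_zero] at hx ⊢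
  exact ((continuous_id.matrix_det.continuousAt.comp hM).eventually_ne hx)

section EntrywiseDeriv

variable {𝕜 𝔸 l m n : Type*} [NontriviallyNormedField 𝕜] [NormedRing 𝔸] [NormedAlgebra 𝕜 𝔸]

/-- The entrywise derivative of a matrix-valued function: the operation `∂_z` in the definition of
the currents. An entry that is not differentiable at `z` is sent to `0`. -/
noncomputable def entrywiseDeriv (M : 𝕜 → Matrix m n 𝔸) (z : 𝕜) : Matrix m n 𝔸 :=
  Matrix.of fun i j => deriv (fun t => M t i j) z

theorem entrywiseDeriv_mul_const [Fintype m] {M : 𝕜 → Matrix l m 𝔸} {z : 𝕜}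
    (hM : ∀ i k, DifferentiableAt 𝕜 (fun t => M t i k) z) (C : Matrix m n 𝔸) :
    entrywiseDeriv (fun t => M t * C) z = entrywiseDeriv M z * C := by
  ext i j
  exact (HasDerivAt.fun_sum fun k _ => (hM i k).hasDerivAt.mul_const (C k j)).deriv

end EntrywiseDeriv

section Wronskian

variable {𝕜 ι : Type*} [NontriviallyNormedField 𝕜]

/-- The `m`-rowed Wronskian matrix of a family of functions, whose row `i` holds the `i`-th
derivatives. It is allowed to be rectangular. -/
noncomputable def wronskianMatrix (m : ℕ) (f : 𝕜 → ι → 𝕜) (z : 𝕜) : Matrix (Fin m) ι 𝕜 :=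
  Matrix.of fun i a => iteratedDeriv i (fun t => f t a) z

theorem entrywiseDeriv_wronskianMatrix_row {m : ℕ} (f : 𝕜 → ι → 𝕜) (z : 𝕜) {i k : Fin m}
    (hk : (k : ℕ) = i + 1) :
    entrywiseDeriv (wronskianMatrix m f) z i = wronskianMatrix m f z k := by
  ext a
  simp only [entrywiseDeriv, wronskianMatrix, Matrix.of_apply, hk, iteratedDeriv_succ]

theorem differentiableAt_wronskianMatrix_apply [CompleteSpace 𝕜] {m : ℕ} {f : 𝕜 → ι → 𝕜} {z : 𝕜}
    (hf : ∀ a, AnalyticAt 𝕜 (fun t => f t a) z) (i : Fin m) (a : ι) :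
    DifferentiableAt 𝕜 (fun t => wronskianMatrix m f t i a) z := by
  simp only [wronskianMatrix, Matrix.of_apply, iteratedDeriv_eq_iterate]
  exact ((hf a).iterated_deriv i).differentiableAt

theorem continuousAt_wronskianMatrix [CompleteSpace 𝕜] (m : ℕ) {f : 𝕜 → ι → 𝕜} {z : 𝕜}
    (hf : ∀ a, AnalyticAt 𝕜 (fun t => f t a) z) : ContinuousAt (wronskianMatrix m f) z :=
  continuousAt_pi.2 fun i => continuousAt_pi.2 fun a =>
    (differentiableAt_wronskianMatrix_apply hf i a).continuousAt

end Wronskian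

section Currents

variable {n : ℕ} {f g : ℂ → Fin (n + 1) → ℂ} {z w : ℂ}

theorem etaM_eq_wronskianMatrix_mul_transpose (f g : ℂ → Fin (n + 1) → ℂ) (z w : ℂ) :
    etaM n f g z w = wronskianMatrix (n + 1) f z * (wronskianMatrix (n + 1) g w)ᵀ :=
  rfl

theorem isUnit_etaM_iff :
    IsUnit (etaM n f g z w) ↔
      IsUnit (wronskianMatrix (n + 1) f z) ∧ IsUnit (wronskianMatrix (n + 1) g w) := by
  rw [etaM_eq_wronskianMatrix_mul_transpose, IsUnit.mul_iff, Matrix.isUnit_transpose]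

theorem etaM_transpose (f g : ℂ → Fin (n + 1) → ℂ) (z w : ℂ) :
    (etaM n f g z w)ᵀ = etaM n g f w z := by
  simp only [etaM_eq_wronskianMatrix_mul_transpose, Matrix.transpose_mul,
    Matrix.transpose_transpose]

theorem Jcur_transpose (f g : ℂ → Fin (n + 1) → ℂ) (z w : ℂ) :
    (Jcur n g f w z)ᵀ = Jbarcur n f g z w := by
  simp only [Jcur, Jbarcur, ← etaM_transpose f g, Matrix.neg_mul, Matrix.transpose_neg,
    Matrix.transpose_mul, Matrix.transpose_nonsing_inv, Matrix.transpose_transpose]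
  rfl

theorem Jcur_eq_neg_entrywiseDeriv_wronskianMatrix_mul_inv
    (hf : ∀ A, AnalyticAt ℂ (fun t => f t A) z) (hw : IsUnit (wronskianMatrix (n + 1) g w)) :
    Jcur n f g z w =
      -(entrywiseDeriv (wronskianMatrix (n + 1) f) z * (wronskianMatrix (n + 1) f z)⁻¹) := by
  set F := wronskianMatrix (n + 1) f
  set G := wronskianMatrix (n + 1) g w
  calc Jcur n f g z w = -(entrywiseDeriv (fun t => F t * Gᵀ) z * (F z * Gᵀ)⁻¹) :=
        Matrix.neg_mul _ _
    _ = -(entrywiseDeriv F z * Gᵀ * (F z * Gᵀ)⁻¹) := by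
        rw [entrywiseDeriv_mul_const (differentiableAt_wronskianMatrix_apply hf)]
    _ = -(entrywiseDeriv F z * (F z)⁻¹) := by
        rw [mul_mul_mul_inv_of_isUnit _ _ ((Matrix.isUnit_transpose _).2 hw)]

theorem deriv_Jcur_apply_eq_zero (hf : ∀ A, AnalyticAt ℂ (fun t => f t A) z)
    (hg : ∀ A, AnalyticAt ℂ (fun t => g t A) w) (hη : IsUnit (etaM n f g z w))
    (i j : Fin (n + 1)) : deriv (fun t => Jcur n f g z t i j) w = 0 := by
  have hG : ∀ᶠ t in 𝓝 w, IsUnit (wronskianMatrix (n + 1) g t) :=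
    eventually_isUnit_matrix (continuousAt_wronskianMatrix _ hg) (isUnit_etaM_iff.1 hη).2
  have hconst : (fun t => Jcur n f g z t i j) =ᶠ[𝓝 w] fun _ => Jcur n f g z w i j := by
    filter_upwards [hG] with t ht
    rw [Jcur_eq_neg_entrywiseDeriv_wronskianMatrix_mul_inv hf ht,
      Jcur_eq_neg_entrywiseDeriv_wronskianMatrix_mul_inv hf hG.self_of_nhds]
  rw [hconst.deriv_eq, deriv_const]

theorem Jcur_apply_of_lt (hf : ∀ A, AnalyticAt ℂ (fun t => f t A) z)
    (hη : IsUnit (etaM n f g z w)) {i : Fin (n + 1)} (hi : (i : ℕ) < n) (j : Fin (n + 1)) :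
    Jcur n f g z w i j = if (j : ℕ) = (i : ℕ) + 1 then -1 else 0 := by
  obtain ⟨hF, hG⟩ := isUnit_etaM_iff.1 hη
  let k : Fin (n + 1) := ⟨i + 1, Nat.succ_lt_succ hi⟩
  have hrow : entrywiseDeriv (wronskianMatrix (n + 1) f) z i = wronskianMatrix (n + 1) f z k :=
    entrywiseDeriv_wronskianMatrix_row f z rfl
  rw [Jcur_eq_neg_entrywiseDeriv_wronskianMatrix_mul_inv hf hG, Matrix.neg_apply,
    mul_inv_apply_of_row_eq hF hrow, neg_ite, neg_zero]
  simp only [Fin.ext_iff, k]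

end Currents

theorem stmt3_general (n : ℕ) (f g : ℂ → Fin (n + 1) → ℂ) (z w : ℂ)
    (hf : ∀ A, AnalyticAt ℂ (fun t => f t A) z) (hg : ∀ A, AnalyticAt ℂ (fun t => g t A) w)
    (hη : IsUnit (etaM n f g z w)) :
    (∀ i j : Fin (n + 1), deriv (fun t => Jcur n f g z t i j) w = 0) ∧
    (∀ i j : Fin (n + 1), deriv (fun t => Jbarcur n f g t w i j) z = 0) ∧
    (∀ i j : Fin (n + 1), (i : ℕ) < n →
      Jcur n f g z w i j = if (j : ℕ) = (i : ℕ) + 1 then -1 else 0) ∧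
    (∀ j k : Fin (n + 1), (j : ℕ) < n →
      Jbarcur n f g z w k j = if (k : ℕ) = (j : ℕ) + 1 then -1 else 0) := by
  have hη' : IsUnit (etaM n g f w z) := etaM_transpose f g z w ▸ (Matrix.isUnit_transpose _).2 hη
  simp only [← Jcur_transpose, Matrix.transpose_apply]
  exact ⟨deriv_Jcur_apply_eq_zero hf hg hη, fun i j => deriv_Jcur_apply_eq_zero hg hf hη' j i,
    fun _ j hi => Jcur_apply_of_lt hf hη hi j, fun _ k hj => Jcur_apply_of_lt hg hη' hj k⟩

/-- on an open set where η is invertible, the currents are chiral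
(∂_w 𝒥 = 0, ∂_z 𝒥̄ = 0) and have the constrained Drinfeld–Sokolov form
𝒥_{i j} = −δ_{j,i+1} (i ≤ n−1) and 𝒥̄_{k j} = −δ_{k,j+1} (j ≤ n−1). -/
theorem stmt3 (n : ℕ) (f g : ℂ → Fin (n + 1) → ℂ)
    (hf : ∀ A, Differentiable ℂ fun z => f z A)
    (hg : ∀ A, Differentiable ℂ fun z => g z A)
    (Ω : Set (ℂ × ℂ)) (hΩ : IsOpen Ω)
    (hinv : ∀ p ∈ Ω, IsUnit (etaM n f g p.1 p.2)) :
    ∀ p ∈ Ω,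
      (∀ i j : Fin (n + 1), deriv (fun t => Jcur n f g p.1 t i j) p.2 = 0) ∧
      (∀ i j : Fin (n + 1), deriv (fun t => Jbarcur n f g t p.2 i j) p.1 = 0) ∧
      (∀ i j : Fin (n + 1), (i : ℕ) < n →
        Jcur n f g p.1 p.2 i j = if (j : ℕ) = (i : ℕ) + 1 then -1 else 0) ∧
      (∀ j k : Fin (n + 1), (j : ℕ) < n →
        Jbarcur n f g p.1 p.2 k j = if (k : ℕ) = (j : ℕ) + 1 then -1 else 0) :=
  fun p hp => stmt3_general n f g p.1 p.2 (fun A => (hf A).analyticAt p.1)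
    (fun A => (hg A).analyticAt p.2) (hinv p hp)
end

section
/- Second part of the Lemma on the transformations Λ (gauge invariance of the Drinfeld–Sokolov form, Eqs. (2.3.30)–(2.3.33)): with s and I as above, let λ_0, …, λ_n : ℂ → ℂ be differentiable and let λ(z) be the (n+1)×(n+1) matrix whose only possibly nonzero entries are in the bottom row, λ(z)_{n a} = λ_a(z). Then the matrix δ𝒥(z) := s′(z) + s(z)·I − I·s(z) + s(z)·λ(z) − λ(z)·s(z) again has nonzero entries only in the bottom row, and its bottom-row entries are δ𝒥(z)_{n a} = ((n+1) choose a)·ε^{(n+1−a)}(z) − ∑_{b=a+1}^{n} (b choose a)·λ_b(z)·ε^{(b−a)}(z). Hence the form of the Drinfeld–Sokolov current 𝒥 = −I − λ is preserved by the infinitesimal gl(1) gauge transformation generated by s. -/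
open scoped BigOperators

/-- The matrix s(z)_{a b} = C(a,b)·ε^{(a−b)}(z) for b ≤ a, and 0 for b > a. -/
noncomputable def sMat (n : ℕ) (ε : ℂ → ℂ) (z : ℂ) :
    Matrix (Fin (n + 1)) (Fin (n + 1)) ℂ :=
  Matrix.of fun a b =>
    if (b : ℕ) ≤ (a : ℕ) then
      (Nat.choose (a : ℕ) (b : ℕ) : ℂ) * iteratedDeriv ((a : ℕ) - (b : ℕ)) ε z
    else 0

/-- The constant matrix I with I_{j k} = 1 if k = j+1 and 0 otherwise. -/
noncomputable def Imat (n : ℕ) : Matrix (Fin (n + 1)) (Fin (n + 1)) ℂ :=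
  Matrix.of fun j k => if (k : ℕ) = (j : ℕ) + 1 then 1 else 0

/-- Entrywise derivative s′(z) of the matrix-valued function s. -/
noncomputable def sDer (n : ℕ) (ε : ℂ → ℂ) (z : ℂ) :
    Matrix (Fin (n + 1)) (Fin (n + 1)) ℂ :=
  Matrix.of fun a b => deriv (fun t => sMat n ε t a b) z

/-- The matrix λ(z) whose only possibly nonzero entries are in the bottom row,
λ(z)_{n a} = λ_a(z). -/
noncomputable def lamM (n : ℕ) (lam : Fin (n + 1) → ℂ → ℂ) (z : ℂ) :
    Matrix (Fin (n + 1)) (Fin (n + 1)) ℂ :=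
  Matrix.of fun a b => if (a : ℕ) = n then lam b z else 0

/-!
Row `a` of `s` lists the coefficients of the differential operator `∂ᵃ ∘ ε = ∑ s_{ab} ∂ᵇ`. Composing
with `∂` on the left turns `s` into `s' + s I`, so row `a` of `s' + s I` is the list of coefficients
of `∂ᵃ⁺¹ ∘ ε` of order at most `n`. For `a < n` this is also row `a` of `I s`, hence only the bottom
row survives in `s' + s I - I s`. On the other hand `λ = eₙ vᵀ` has rank one and `s eₙ = ε eₙ`, so
`s λ - λ s = eₙ (ε v - sᵀ v)ᵀ` is again a bottom row, in which the diagonal term `ε v` cancels.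
-/

section Algebra

open scoped Matrix

variable {R m : Type*} {n : ℕ}

/-- The generalized Pascal matrix of a sequence `e`: row `a` lists the coefficients of the Appell
polynomial `∑ b, (a.choose b) e (a - b) X ^ b`. Above the diagonal `a - b` is truncated, and it is
the binomial coefficient that makes the entry vanish. -/
def appellMatrix [Semiring R] (n : ℕ) (e : ℕ → R) : Matrix (Fin (n + 1)) (Fin (n + 1)) R :=
  Matrix.of fun a b => ((a : ℕ).choose b : R) * e (a - b)

/-- The nilpotent shift matrix, with ones on the first superdiagonal; over `ℂ` it is `Imat`. -/
def shiftMatrix (R : Type*) [Semiring R] (n : ℕ) : Matrix (Fin (n + 1)) (Fin (n + 1)) R :=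
  Matrix.of fun j k => if (k : ℕ) = j + 1 then 1 else 0

/-- The matrix with bottom row `v` and zeros elsewhere, encoded as the rank-one matrix `eₙ vᵀ` so
that the products with it are matrix-vector products. -/
def bottomRow [Semiring R] (v : Fin (n + 1) → R) : Matrix (Fin (n + 1)) (Fin (n + 1)) R :=
  Matrix.vecMulVec (Pi.single (Fin.last n) 1) v

section Semiring

variable [Semiring R]

theorem appellMatrix_apply (e : ℕ → R) (a b : Fin (n + 1)) :
    appellMatrix n e a b = ((a : ℕ).choose b : R) * e (a - b) :=
  rfl

theorem appellMatrix_apply_self (e : ℕ → R) (a : Fin (n + 1)) : appellMatrix n e a a = e 0 := by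
  simp [appellMatrix_apply]

theorem appellMatrix_apply_of_lt (e : ℕ → R) {a b : Fin (n + 1)} (h : a < b) :
    appellMatrix n e a b = 0 := by
  simp [appellMatrix_apply, Nat.choose_eq_zero_of_lt h]

theorem bottomRow_apply_last (v : Fin (n + 1) → R) (b : Fin (n + 1)) :
    bottomRow v (Fin.last n) b = v b := by
  simp [bottomRow, Matrix.vecMulVec_apply]

theorem bottomRow_apply_of_ne_last (v : Fin (n + 1) → R) {a : Fin (n + 1)} (ha : a ≠ Fin.last n)
    (b : Fin (n + 1)) : bottomRow v a b = 0 := by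
  simp [bottomRow, Matrix.vecMulVec_apply, ha]

theorem mul_shiftMatrix_apply_zero (A : Matrix m (Fin (n + 1)) R) (i : m) :
    (A * shiftMatrix R n) i 0 = 0 := by
  simp [Matrix.mul_apply, shiftMatrix]

theorem mul_shiftMatrix_apply_succ (A : Matrix m (Fin (n + 1)) R) (i : m) (b : Fin n) :
    (A * shiftMatrix R n) i b.succ = A i b.castSucc := by
  simp [Matrix.mul_apply, shiftMatrix, Fin.sum_univ_castSucc, Fin.val_inj, b.is_lt.ne]

theorem shiftMatrix_mul_apply_castSucc (A : Matrix (Fin (n + 1)) m R) (a : Fin n) (j : m) :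
    (shiftMatrix R n * A) a.castSucc j = A a.succ j := by
  simp [Matrix.mul_apply, shiftMatrix, Fin.sum_univ_succ, Fin.val_inj]

theorem shiftMatrix_mul_apply_last (A : Matrix (Fin (n + 1)) m R) (j : m) :
    (shiftMatrix R n * A) (Fin.last n) j = 0 := by
  simp [Matrix.mul_apply, shiftMatrix, (Fin.is_lt _).ne]

/-- The sequence `e` shifted by one plays the role of the derivative of `e`, so this is the
Leibniz rule `∂ ∘ (∂ᵃ ∘ ε) = ∂ᵃ⁺¹ ∘ ε`. -/
theorem appellMatrix_succ_add_mul_shiftMatrix_apply (e : ℕ → R) (a b : Fin (n + 1)) :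
    (appellMatrix n (fun k => e (k + 1)) + appellMatrix n e * shiftMatrix R n) a b =
      ((a + 1 : ℕ).choose b : R) * e (a + 1 - b) := by
  rw [Matrix.add_apply]
  induction b using Fin.cases with
  | zero => simp [mul_shiftMatrix_apply_zero, appellMatrix_apply]
  | succ b =>
    rw [mul_shiftMatrix_apply_succ, appellMatrix_apply, appellMatrix_apply, Fin.val_succ,
      Fin.val_castSucc, Nat.choose_succ_succ, Nat.add_sub_add_right, Nat.cast_add, add_mul,
      add_comm]
    rcases le_or_gt ((b : ℕ) + 1) a with h | h
    · rw [show (a : ℕ) - (b + 1) + 1 = a - b by lia]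
    · simp [Nat.choose_eq_zero_of_lt h]

theorem appellMatrix_succ_add_mul_shiftMatrix (e : ℕ → R) :
    appellMatrix n (fun k => e (k + 1)) + appellMatrix n e * shiftMatrix R n =
      shiftMatrix R n * appellMatrix n e +
        bottomRow fun b => ((n + 1).choose b : R) * e (n + 1 - b) := by
  ext a b
  rw [appellMatrix_succ_add_mul_shiftMatrix_apply, Matrix.add_apply]
  induction a using Fin.lastCases with
  | last => rw [shiftMatrix_mul_apply_last, bottomRow_apply_last, zero_add, Fin.val_last]
  | cast a =>
    rw [shiftMatrix_mul_apply_castSucc, bottomRow_apply_of_ne_last _ a.castSucc_ne_last, add_zero,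
      appellMatrix_apply, Fin.val_succ, Fin.val_castSucc]

theorem appellMatrix_mulVec_single_last (e : ℕ → R) :
    appellMatrix n e *ᵥ Pi.single (Fin.last n) 1 = e 0 • Pi.single (Fin.last n) 1 := by
  ext a
  rw [Matrix.mulVec_single_one, Matrix.col_apply]
  rcases (Fin.le_last a).eq_or_lt with rfl | ha
  · simp [appellMatrix_apply_self]
  · simp [appellMatrix_apply_of_lt e ha, ha.ne]

end Semiring

theorem vecMul_appellMatrix_apply [CommSemiring R] (v : Fin (n + 1) → R) (e : ℕ → R)
    (a : Fin (n + 1)) : (v ᵥ* appellMatrix n e) a =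
      e 0 * v a + ∑ b ∈ Finset.Ioi a, ((b : ℕ).choose a : R) * v b * e (b - a) := by
  have sum_Ici : (v ᵥ* appellMatrix n e) a =
      ∑ b ∈ Finset.Ici a, v b * appellMatrix n e b a := by
    refine (Finset.sum_subset (Finset.subset_univ (Finset.Ici a)) fun b _ hb => ?_).symm
    exact mul_eq_zero_of_right _ (appellMatrix_apply_of_lt e (by simpa using hb))
  rw [sum_Ici, ← Finset.Ioi_insert, Finset.sum_insert Finset.notMem_Ioi_self,
    appellMatrix_apply_self, mul_comm]
  congr! 2 with b
  rw [appellMatrix_apply]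
  ring

theorem appellMatrix_mul_bottomRow_sub_bottomRow_mul [CommRing R] (v : Fin (n + 1) → R)
    (e : ℕ → R) :
    appellMatrix n e * bottomRow v - bottomRow v * appellMatrix n e =
      -bottomRow fun a => ∑ b ∈ Finset.Ioi a, ((b : ℕ).choose a : R) * v b * e (b - a) := by
  rw [bottomRow, Matrix.mul_vecMulVec, Matrix.vecMulVec_mul, appellMatrix_mulVec_single_last,
    Matrix.smul_vecMulVec, ← Matrix.vecMulVec_smul, ← Matrix.vecMulVec_sub, bottomRow,
    ← Matrix.vecMulVec_neg]
  congr 1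
  ext a
  simp [vecMul_appellMatrix_apply]

end Algebra

section Derivatives

variable {𝕜 : Type*} [NontriviallyNormedField 𝕜] {n : ℕ}

theorem deriv_appellMatrix_iteratedDeriv {ε : 𝕜 → 𝕜} {z : 𝕜}
    (hε : ∀ k ≤ n, DifferentiableAt 𝕜 (iteratedDeriv k ε) z) :
    Matrix.of (fun a b => deriv (fun t => appellMatrix n (iteratedDeriv · ε t) a b) z) =
      appellMatrix n (fun k => iteratedDeriv (k + 1) ε z) := by
  ext a b
  simp only [Matrix.of_apply, appellMatrix_apply, iteratedDeriv_succ]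
  exact deriv_const_mul _ (hε _ (by lia))

theorem stmt7_general {ε : 𝕜 → 𝕜} {z : 𝕜}
    (hε : ∀ k ≤ n, DifferentiableAt 𝕜 (iteratedDeriv k ε) z) (v : Fin (n + 1) → 𝕜) :
    Matrix.of (fun a b => deriv (fun t => appellMatrix n (iteratedDeriv · ε t) a b) z)
        + appellMatrix n (iteratedDeriv · ε z) * shiftMatrix 𝕜 n
        - shiftMatrix 𝕜 n * appellMatrix n (iteratedDeriv · ε z)
        + appellMatrix n (iteratedDeriv · ε z) * bottomRow v
        - bottomRow v * appellMatrix n (iteratedDeriv · ε z) =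
      bottomRow fun a => ((n + 1).choose a : 𝕜) * iteratedDeriv (n + 1 - a) ε z
        - ∑ b ∈ Finset.Ioi a, ((b : ℕ).choose a : 𝕜) * v b * iteratedDeriv (b - a) ε z := by
  rw [deriv_appellMatrix_iteratedDeriv hε,
    appellMatrix_succ_add_mul_shiftMatrix (iteratedDeriv · ε z), add_sub_cancel_left,
    add_sub_assoc, appellMatrix_mul_bottomRow_sub_bottomRow_mul, ← sub_eq_add_neg]
  exact (Matrix.vecMulVec_sub _ _ _).symm

end Derivatives

theorem sMat_eq_appellMatrix (n : ℕ) (ε : ℂ → ℂ) (z : ℂ) :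
    sMat n ε z = appellMatrix n (iteratedDeriv · ε z) := by
  ext a b
  rw [appellMatrix_apply, sMat, Matrix.of_apply, ite_eq_left_iff]
  intro h
  simp [Nat.choose_eq_zero_of_lt (not_le.mp h)]

theorem Imat_eq_shiftMatrix (n : ℕ) : Imat n = shiftMatrix ℂ n :=
  rfl

theorem lamM_eq_bottomRow (n : ℕ) (lam : Fin (n + 1) → ℂ → ℂ) (z : ℂ) :
    lamM n lam z = bottomRow fun b => lam b z := by
  ext a b
  simp [lamM, bottomRow, Matrix.vecMulVec_apply, Pi.single_apply, Fin.ext_iff]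

/-- gauge invariance of the Drinfeld–Sokolov form (Eqs. 2.3.30–2.3.33):
δ𝒥 = s′ + s·I − I·s + s·λ − λ·s has nonzero entries only in the bottom row, with
δ𝒥_{n a} = C(n+1,a)·ε^{(n+1−a)} − ∑_{b=a+1}^{n} C(b,a)·λ_b·ε^{(b−a)}. -/
theorem stmt7 (n : ℕ) (ε : ℂ → ℂ) (hε : Differentiable ℂ ε)
    (lam : Fin (n + 1) → ℂ → ℂ) (hlam : ∀ b, Differentiable ℂ (lam b)) :
    ∀ z : ℂ,
      (∀ a b : Fin (n + 1), (a : ℕ) < n →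
        (sDer n ε z + sMat n ε z * Imat n - Imat n * sMat n ε z
          + sMat n ε z * lamM n lam z - lamM n lam z * sMat n ε z) a b = 0) ∧
      (∀ a : Fin (n + 1),
        (sDer n ε z + sMat n ε z * Imat n - Imat n * sMat n ε z
          + sMat n ε z * lamM n lam z - lamM n lam z * sMat n ε z) (Fin.last n) a
          = (Nat.choose (n + 1) (a : ℕ) : ℂ) * iteratedDeriv (n + 1 - (a : ℕ)) ε z
            - ∑ b : Fin (n + 1),
                if (a : ℕ) < (b : ℕ) then
                  (Nat.choose (b : ℕ) (a : ℕ) : ℂ) * lam b z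
                    * iteratedDeriv ((b : ℕ) - (a : ℕ)) ε z
                else 0) := by
  intro z
  simp only [sDer, sMat_eq_appellMatrix, Imat_eq_shiftMatrix, lamM_eq_bottomRow,
    stmt7_general fun k _ => hε.contDiff.differentiable_iteratedDeriv' k z]
  exact ⟨fun a b ha => bottomRow_apply_of_ne_last _ (Fin.ne_of_lt ha) b, fun a => by
    simp only [bottomRow_apply_last, ← Fin.lt_def, ← Finset.sum_filter, Finset.filter_lt_eq_Ioi]⟩
end

section
/- Gauss–Codazzi equations coincide with the A_n Toda equations (Theorems 'Gauss-Codazzi equations' and 'Toda equations', in bilinear form): for every 1 ≤ ℓ ≤ n and all z, w ∈ ℂ, τ_ℓ(z,w) · ∂_z∂_w τ_ℓ(z,w) − (∂_z τ_ℓ(z,w)) · (∂_w τ_ℓ(z,w)) = τ_{ℓ+1}(z,w) · τ_{ℓ−1}(z,w). Equivalently, wherever the τ's are nonvanishing, the fields Φ_ℓ = −ln τ_ℓ satisfy the Toda equations ∂_z∂_w Φ_ℓ = −exp(2Φ_ℓ − Φ_{ℓ−1} − Φ_{ℓ+1}). -/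
open scoped BigOperators

/-!
All the `τ_ℓ` are leading minors of one matrix whose `(i + 1, j)` entry is the `z`-derivative of the
`(i, j)` entry, and likewise for columns and `w`. Differentiating a leading minor row by row, every
term but the last repeats a row, so `∂_z` replaces the last row by the next one and `∂_w` does the
same with the last column. The Toda equation for `τ_ℓ` is therefore the Desnanot–Jacobi identity for
the leading block of order `ℓ + 1`, with respect to its last two rows and columns; that identity is
Jacobi's formula for the determinant of a `2 × 2` block of the adjugate.
-/

section Determinants

open Matrix

variable {R : Type*} [CommRing R]

theorem det_mul_det_toBlocks₂₂_adjugate {m n : Type*} [Fintype m] [DecidableEq m] [Fintype n]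
    [DecidableEq n] (M : Matrix (m ⊕ n) (m ⊕ n) R) :
    M.det * M.adjugate.toBlocks₂₂.det = M.toBlocks₁₁.det * M.det ^ Fintype.card n := by
  have blocks : fromBlocks M.toBlocks₁₁ M.toBlocks₁₂ M.toBlocks₂₁ M.toBlocks₂₂ *
      fromBlocks M.adjugate.toBlocks₁₁ M.adjugate.toBlocks₁₂
        M.adjugate.toBlocks₂₁ M.adjugate.toBlocks₂₂ =
      fromBlocks (M.det • 1) 0 0 (M.det • 1) := by
    rw [fromBlocks_toBlocks, fromBlocks_toBlocks, mul_adjugate, ← fromBlocks_one,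
      fromBlocks_smul, smul_zero, smul_zero]
  obtain ⟨-, h₁₂, -, h₂₂⟩ := fromBlocks_inj.mp ((fromBlocks_multiply ..).symm.trans blocks)
  have factor : M * fromBlocks 1 M.adjugate.toBlocks₁₂ 0 M.adjugate.toBlocks₂₂ =
      fromBlocks M.toBlocks₁₁ 0 M.toBlocks₂₁ (M.det • 1) := by
    conv_lhs => enter [1]; rw [← fromBlocks_toBlocks M]
    rw [fromBlocks_multiply, h₁₂, h₂₂]
    simp only [Matrix.mul_one, Matrix.mul_zero, add_zero]
  have := congrArg det factor
  rwa [det_mul, det_fromBlocks_zero₂₁, det_one, one_mul, det_fromBlocks_zero₁₂, det_smul, det_one,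
    mul_one] at this

theorem det_toBlocks₂₂_adjugate {m n : Type*} [Fintype m] [DecidableEq m] [Fintype n]
    [DecidableEq n] [Nonempty n] (M : Matrix (m ⊕ n) (m ⊕ n) R) :
    M.adjugate.toBlocks₂₂.det = M.toBlocks₁₁.det * M.det ^ (Fintype.card n - 1) := by
  -- It suffices to treat the generic matrix, whose determinant can be cancelled.
  let X := mvPolynomialX (m ⊕ n) (m ⊕ n) ℤ
  have generic : X.adjugate.toBlocks₂₂.det = X.toBlocks₁₁.det * X.det ^ (Fintype.card n - 1) := by
    apply mul_left_cancel₀ (det_mvPolynomialX_ne_zero (m ⊕ n) ℤ)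
    rw [det_mul_det_toBlocks₂₂_adjugate, mul_left_comm, mul_pow_sub_one Fintype.card_ne_zero]
  let φ := MvPolynomial.aeval (R := ℤ) fun p : (m ⊕ n) × (m ⊕ n) => M p.1 p.2
  have hφ : φ.mapMatrix X = M := mvPolynomialX_mapMatrix_aeval ℤ M
  have hφ₁₁ : φ.mapMatrix X.toBlocks₁₁ = M.toBlocks₁₁ := by
    rw [← hφ]
    rfl
  have hφ₂₂ : φ.mapMatrix X.adjugate.toBlocks₂₂ = M.adjugate.toBlocks₂₂ := by
    rw [← hφ, ← AlgHom.map_adjugate]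
    rfl
  simpa only [map_mul, map_pow, AlgHom.map_det, hφ, hφ₁₁, hφ₂₂] using congrArg φ generic

theorem desnanot_jacobi_last_two {m : ℕ} (M : Matrix (Fin (m + 2)) (Fin (m + 2)) R) :
    (M.submatrix Fin.castSucc Fin.castSucc).det *
        (M.submatrix (Fin.last m).castSucc.succAbove (Fin.last m).castSucc.succAbove).det -
      (M.submatrix (Fin.last m).castSucc.succAbove Fin.castSucc).det *
        (M.submatrix Fin.castSucc (Fin.last m).castSucc.succAbove).det =
      M.det * (M.submatrix (Fin.castAdd 2) (Fin.castAdd 2)).det := by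
  let e : Fin m ⊕ Fin 2 ≃ Fin (m + 2) := finSumFinEquiv
  have e_zero : e (.inr 0) = (Fin.last m).castSucc := rfl
  have e_one : e (.inr 1) = Fin.last (m + 1) := rfl
  have jacobi := det_toBlocks₂₂_adjugate (M.submatrix e e)
  rw [adjugate_submatrix_equiv_self, det_submatrix_equiv_self, det_fin_two] at jacobi
  simp only [toBlocks₂₂, of_apply, submatrix_apply, e_zero, e_one,
    adjugate_fin_succ_eq_det_submatrix, Fin.succAbove_last, Fin.val_castSucc, Fin.val_last,
    Fintype.card_fin] at jacobi
  have even_diag (k : ℕ) : (-1 : R) ^ (k + k) = 1 := Even.neg_one_pow ⟨k, rfl⟩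
  have odd_off_diag : (-1 : R) ^ (m + (m + 1)) = -1 := by
    rw [← add_assoc, pow_succ, even_diag, one_mul]
  have leading_block : (M.submatrix e e).toBlocks₁₁ =
      M.submatrix (Fin.castAdd 2) (Fin.castAdd 2) := rfl
  rw [add_comm (m + 1) m, even_diag, even_diag, odd_off_diag, leading_block] at jacobi
  linear_combination jacobi

end Determinants

section Derivatives

open Matrix

variable {𝕜 𝔸 : Type*} [NontriviallyNormedField 𝕜] [NormedCommRing 𝔸] [NormedAlgebra 𝕜 𝔸]

theorem hasDerivAt_det {n : Type*} [Fintype n] [DecidableEq n] {M : 𝕜 → Matrix n n 𝔸}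
    {M' : Matrix n n 𝔸} {x : 𝕜} (hM : ∀ i j, HasDerivAt (fun t => M t i j) (M' i j) x) :
    HasDerivAt (fun t => (M t).det) (∑ i, ((M x).updateRow i (M' i)).det) x := by
  let D : ContinuousMultilinearMap 𝕜 (fun _ : n => n → 𝔸) 𝔸 :=
    { (detRowAlternating (n := n) (R := 𝔸)).toMultilinearMap.restrictScalars 𝕜 with
      cont := continuous_id.matrix_det }
  have hM' : HasDerivAt (fun t i j => M t i j) M' x :=
    hasDerivAt_pi.mpr fun i => hasDerivAt_pi.mpr (hM i)
  exact ((D.hasFDerivAt (M x)).comp_hasDerivAt x hM').congr_deriv (D.linearDeriv_apply ..)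

theorem hasDerivAt_det_submatrix_castSucc_left {m : ℕ}
    {M : 𝕜 → Matrix (Fin (m + 2)) (Fin (m + 1)) 𝔸} {x : 𝕜}
    (hM : ∀ i j, HasDerivAt (fun t => M t (Fin.castSucc i) j) (M x i.succ j) x) :
    HasDerivAt (fun t => ((M t).submatrix Fin.castSucc id).det)
      ((M x).submatrix (Fin.last m).castSucc.succAbove id).det x := by
  refine (hasDerivAt_det (M := fun t => (M t).submatrix Fin.castSucc id)
    (M' := (M x).submatrix Fin.succ id) hM).congr_deriv ?_
  rw [Fin.sum_univ_castSucc, Finset.sum_eq_zero, zero_add]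
  · congr 1
    ext i j
    cases i using Fin.lastCases <;> simp
  · intro k _
    refine det_zero_of_row_eq (i := k.castSucc) (j := k.succ) Fin.castSucc_lt_succ.ne ?_
    rw [updateRow_self, updateRow_ne Fin.castSucc_lt_succ.ne']
    rfl

theorem hasDerivAt_det_submatrix_castSucc_right {m : ℕ}
    {M : 𝕜 → Matrix (Fin (m + 1)) (Fin (m + 2)) 𝔸} {x : 𝕜}
    (hM : ∀ i j, HasDerivAt (fun t => M t i (Fin.castSucc j)) (M x i j.succ) x) :
    HasDerivAt (fun t => ((M t).submatrix id Fin.castSucc).det)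
      ((M x).submatrix id (Fin.last m).castSucc.succAbove).det x := by
  simpa only [← transpose_submatrix, det_transpose] using
    hasDerivAt_det_submatrix_castSucc_left (M := fun t => (M t)ᵀ) fun i j => hM j i

theorem hasDerivAt_iteratedDeriv {F : Type*} [NormedAddCommGroup F] [NormedSpace 𝕜 F]
    {f : 𝕜 → F} {x : 𝕜} {n : WithTop ℕ∞} {i : ℕ} (hf : ContDiffAt 𝕜 n f x) (hi : i < n) :
    HasDerivAt (iteratedDeriv i f) (iteratedDeriv (i + 1) f x) x := by
  rw [iteratedDeriv_succ, hasDerivAt_deriv_iff, ← iteratedDerivWithin_univ,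
    ← differentiableWithinAt_univ]
  exact hf.contDiffWithinAt.differentiableWithinAt_iteratedDerivWithin hi (by simp)

variable {ι : Type*} [Fintype ι]

/-- The matrix of pairings of the derivatives of `f` at `z` with those of `g` at `w`, of orders less
than `ℓ`: the leading block of `η`, with entries in any commutative normed algebra. Its determinant
is `tauF` when `𝕜 = 𝔸 = ℂ`. -/
noncomputable def jetGram (f g : 𝕜 → ι → 𝔸) (ℓ : ℕ) (z w : 𝕜) : Matrix (Fin ℓ) (Fin ℓ) 𝔸 :=
  of fun i j => ∑ A, iteratedDeriv i (f · A) z * iteratedDeriv j (g · A) w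

theorem hasDerivAt_jetGram_left {f : 𝕜 → ι → 𝔸} {ℓ : ℕ} {z : 𝕜}
    (hf : ∀ A, ContDiffAt 𝕜 ℓ (f · A) z) (g : 𝕜 → ι → 𝔸) (w : 𝕜) (i : Fin ℓ) (j : Fin (ℓ + 1)) :
    HasDerivAt (fun z' => jetGram f g (ℓ + 1) z' w i.castSucc j)
      (jetGram f g (ℓ + 1) z w i.succ j) z :=
  HasDerivAt.fun_sum fun A _ =>
    (hasDerivAt_iteratedDeriv (hf A) (mod_cast i.isLt)).mul_const _

theorem hasDerivAt_jetGram_right {g : 𝕜 → ι → 𝔸} {ℓ : ℕ} {w : 𝕜}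
    (hg : ∀ A, ContDiffAt 𝕜 ℓ (g · A) w) (f : 𝕜 → ι → 𝔸) (z : 𝕜) (i : Fin (ℓ + 1))
    (j : Fin ℓ) :
    HasDerivAt (fun w' => jetGram f g (ℓ + 1) z w' i j.castSucc)
      (jetGram f g (ℓ + 1) z w i j.succ) w :=
  HasDerivAt.fun_sum fun A _ =>
    (hasDerivAt_iteratedDeriv (hg A) (mod_cast j.isLt)).const_mul _

theorem stmt8_general {f g : 𝕜 → ι → 𝔸} {ℓ : ℕ} (hℓ : 1 ≤ ℓ) {z w : 𝕜}
    (hf : ∀ A, ContDiffAt 𝕜 ℓ (f · A) z) (hg : ∀ A, ContDiffAt 𝕜 ℓ (g · A) w) :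
    (jetGram f g ℓ z w).det *
          deriv (fun z' => deriv (fun w' => (jetGram f g ℓ z' w').det) w) z -
        deriv (fun z' => (jetGram f g ℓ z' w).det) z *
          deriv (fun w' => (jetGram f g ℓ z w').det) w =
      (jetGram f g (ℓ + 1) z w).det * (jetGram f g (ℓ - 1) z w).det := by
  obtain ⟨m, rfl⟩ : ∃ m, ℓ = m + 1 := ⟨ℓ - 1, by omega⟩
  let H := jetGram f g (m + 2)
  let skip := (Fin.last m).castSucc.succAbove
  have deriv_z (c : Fin (m + 1) → Fin (m + 2)) :
      deriv (fun z' => ((H z' w).submatrix Fin.castSucc c).det) z =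
        ((H z w).submatrix skip c).det :=
    (hasDerivAt_det_submatrix_castSucc_left (M := fun z' => (H z' w).submatrix id c)
      fun i j => hasDerivAt_jetGram_left hf g w i (c j)).deriv
  have deriv_w (z' : 𝕜) : deriv (fun w' => (jetGram f g (m + 1) z' w').det) w =
      ((H z' w).submatrix Fin.castSucc skip).det :=
    (hasDerivAt_det_submatrix_castSucc_right (M := fun w' => (H z' w').submatrix Fin.castSucc id)
      fun i j => hasDerivAt_jetGram_right hg f z' i.castSucc j).deriv
  have deriv_z_tau : deriv (fun z' => (jetGram f g (m + 1) z' w).det) z = _ :=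
    deriv_z Fin.castSucc
  simp only [deriv_w]
  rw [deriv_z skip, deriv_z_tau]
  exact desnanot_jacobi_last_two (H z w)

end Derivatives

/-- Gauss–Codazzi = A_n Toda equations, in bilinear (Hirota) form:
τ_ℓ·∂_z∂_w τ_ℓ − ∂_z τ_ℓ·∂_w τ_ℓ = τ_{ℓ+1}·τ_{ℓ−1} for 1 ≤ ℓ ≤ n. -/
theorem stmt8 (n : ℕ) (f g : ℂ → Fin (n + 1) → ℂ)
    (hf : ∀ A, Differentiable ℂ fun z => f z A)
    (hg : ∀ A, Differentiable ℂ fun z => g z A) :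
    ∀ ℓ : ℕ, 1 ≤ ℓ → ℓ ≤ n → ∀ z w : ℂ,
      tauF n f g ℓ z w * deriv (fun z' => deriv (fun w' => tauF n f g ℓ z' w') w) z
        - deriv (fun z' => tauF n f g ℓ z' w) z * deriv (fun w' => tauF n f g ℓ z w') w
        = tauF n f g (ℓ + 1) z w * tauF n f g (ℓ - 1) z w :=
  fun _ hℓ _ _ _ => stmt8_general hℓ (fun A => (hf A).contDiff.contDiffAt)
    fun A => (hg A).contDiff.contDiffAt
end

section
/- Infinitesimal Plücker formulae (Theorem): let τ_0, τ_1, …, τ_m : ℝ² → ℝ be smooth, everywhere positive functions with τ_0 = 1, satisfying the 2D Toda equations ∂_x∂_y ln τ_{j+1} = τ_j · τ_{j+2} / τ_{j+1}² for all 0 ≤ j ≤ m−2. Define the induced metrics of the associated surfaces g^{(k)} = τ_k · τ_{k+2} / τ_{k+1}² for 0 ≤ k ≤ m−2. Then for every k with 1 ≤ k ≤ m−3, the curvature R^{(k)}√g^{(k)} := −∂_x∂_y ln g^{(k)} satisfies −∂_x∂_y ln g^{(k)} = −g^{(k+1)} + 2·g^{(k)} − g^{(k−1)}. -/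
open scoped BigOperators

/-! The logarithm turns `g⁽ᵏ⁾ = τₖ τₖ₊₂ / τₖ₊₁²` into the second difference
`ln τₖ - 2 ln τₖ₊₁ + ln τₖ₊₂`, with which the linear operator `∂ₓ∂ᵧ` commutes; by the Toda equations
`∂ₓ∂ᵧ ln τⱼ₊₁ = g⁽ʲ⁾`, so `∂ₓ∂ᵧ ln g⁽ᵏ⁾` is the second difference of `g` at `k`. -/

open Filter Function Topology

section MixedDeriv

variable {𝕜 F : Type*} [NontriviallyNormedField 𝕜] [NormedAddCommGroup F] [NormedSpace 𝕜 F]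
  {f g : 𝕜 → 𝕜 → F} {x y : 𝕜}

/-- The mixed partial derivative `∂ₓ∂ᵧ f` at `(x, y)`, the derivative in the second variable being
taken first. It is an iterated `deriv`, hence of junk value `0` where the outer derivative does not
exist. -/
noncomputable def mixedDeriv (f : 𝕜 → 𝕜 → F) (x y : 𝕜) : F :=
  deriv (fun x' => deriv (f x') y) x

theorem eventually_differentiableAt_snd (hf : ContDiffAt 𝕜 1 (uncurry f) (x, y)) :
    ∀ᶠ x' in 𝓝 x, DifferentiableAt 𝕜 (f x') y := by
  have hline : Tendsto (fun x' => (x', y)) (𝓝 x) (𝓝 (x, y)) :=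
    (Continuous.prodMk_left y).tendsto x
  filter_upwards [hline.eventually (hf.eventually (by simp))] with x' hx'
  exact (hx'.differentiableAt one_ne_zero).comp (f := fun y' => (x', y')) y (by fun_prop)

theorem differentiableAt_deriv_snd (hf : ContDiffAt 𝕜 2 (uncurry f) (x, y)) :
    DifferentiableAt 𝕜 (fun x' => deriv (f x') y) x := by
  have hfderiv : ContDiffAt 𝕜 1 (fun x' => fderiv 𝕜 (f x') y) x :=
    hf.fderiv contDiffAt_const (by norm_num)
  exact (hfderiv.differentiableAt one_ne_zero).clm_apply (differentiableAt_const 1)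

theorem mixedDeriv_congr (h : uncurry f =ᶠ[𝓝 (x, y)] uncurry g) :
    mixedDeriv f x y = mixedDeriv g x y :=
  EventuallyEq.deriv_eq (h.curry_nhds.mono fun _ hx' => EventuallyEq.deriv_eq hx')

theorem mixedDeriv_add (hf : ContDiffAt 𝕜 2 (uncurry f) (x, y))
    (hg : ContDiffAt 𝕜 2 (uncurry g) (x, y)) :
    mixedDeriv (f + g) x y = mixedDeriv f x y + mixedDeriv g x y := by
  have hderiv : (fun x' => deriv ((f + g) x') y) =ᶠ[𝓝 x]
      (fun x' => deriv (f x') y) + fun x' => deriv (g x') y := by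
    filter_upwards [eventually_differentiableAt_snd (hf.of_le one_le_two),
      eventually_differentiableAt_snd (hg.of_le one_le_two)] with x' hfx hgx
    exact deriv_add hfx hgx
  exact hderiv.deriv_eq.trans
    (deriv_add (differentiableAt_deriv_snd hf) (differentiableAt_deriv_snd hg))

theorem mixedDeriv_const_smul (c : 𝕜) (f : 𝕜 → 𝕜 → F) (x y : 𝕜) :
    mixedDeriv (c • f) x y = c • mixedDeriv f x y := by
  simp only [mixedDeriv, Pi.smul_apply, deriv_const_smul_field, deriv_fun_const_smul_field]

end MixedDeriv

section Log

variable {a b c : ℝ → ℝ → ℝ} {x y : ℝ}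

theorem log_mul_div_sq {r s t : ℝ} (hr : r ≠ 0) (hs : s ≠ 0) (ht : t ≠ 0) :
    Real.log (r * t / s ^ 2) = Real.log r + Real.log t + -2 * Real.log s := by
  rw [Real.log_div (mul_ne_zero hr ht) (pow_ne_zero 2 hs), Real.log_mul hr ht, Real.log_pow]
  push_cast
  ring

theorem mixedDeriv_log_mul_div_sq
    (ha : ContDiffAt ℝ 2 (uncurry a) (x, y)) (hb : ContDiffAt ℝ 2 (uncurry b) (x, y))
    (hc : ContDiffAt ℝ 2 (uncurry c) (x, y))
    (ha0 : a x y ≠ 0) (hb0 : b x y ≠ 0) (hc0 : c x y ≠ 0) :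
    mixedDeriv (fun x y => Real.log (a x y * c x y / b x y ^ 2)) x y =
      mixedDeriv (fun x y => Real.log (a x y)) x y + mixedDeriv (fun x y => Real.log (c x y)) x y
        - 2 * mixedDeriv (fun x y => Real.log (b x y)) x y := by
  have hlog : uncurry (fun x y => Real.log (a x y * c x y / b x y ^ 2)) =ᶠ[𝓝 (x, y)]
      uncurry ((fun x y => Real.log (a x y)) + (fun x y => Real.log (c x y)) +
        (-2 : ℝ) • fun x y => Real.log (b x y)) := by
    filter_upwards [ha.continuousAt.eventually_ne ha0, hb.continuousAt.eventually_ne hb0,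
      hc.continuousAt.eventually_ne hc0] with p hap hbp hcp
    exact log_mul_div_sq hap hbp hcp
  rw [mixedDeriv_congr hlog,
    mixedDeriv_add ((ha.log ha0).add (hc.log hc0)) ((hb.log hb0).const_smul (-2 : ℝ)),
    mixedDeriv_add (ha.log ha0) (hc.log hc0), mixedDeriv_const_smul, smul_eq_mul]
  ring

end Log

/-- The coefficient `g⁽ᵏ⁾ = τₖ τₖ₊₂ / τₖ₊₁²` of the metric induced on the `k`-th associated surface
of a W-surface with tau functions `τ`. -/
noncomputable def inducedMetric (τ : ℕ → ℝ → ℝ → ℝ) (k : ℕ) (x y : ℝ) : ℝ :=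
  τ k x y * τ (k + 2) x y / τ (k + 1) x y ^ 2

/- `Real.log` is `log |·|`, so the `τⱼ` may take either sign. The index `k` of `stmt11` is `k + 1`
here. -/
theorem stmt11_general {τ : ℕ → ℝ → ℝ → ℝ} {k : ℕ} {x y : ℝ}
    (hsmooth : ∀ j ∈ Set.Icc (k + 1) (k + 3), ContDiffAt ℝ 2 (uncurry (τ j)) (x, y))
    (hne : ∀ j ∈ Set.Icc (k + 1) (k + 3), τ j x y ≠ 0)
    (htoda : ∀ j ∈ Set.Icc k (k + 2),
      mixedDeriv (fun x y => Real.log (τ (j + 1) x y)) x y = inducedMetric τ j x y) :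
    -mixedDeriv (fun x y => Real.log (inducedMetric τ (k + 1) x y)) x y =
      -inducedMetric τ (k + 2) x y + 2 * inducedMetric τ (k + 1) x y - inducedMetric τ k x y := by
  have h₁ : k + 1 ∈ Set.Icc (k + 1) (k + 3) := by simp
  have h₂ : k + 2 ∈ Set.Icc (k + 1) (k + 3) := by simp
  have h₃ : k + 3 ∈ Set.Icc (k + 1) (k + 3) := by simp
  have hsecond : mixedDeriv (fun x y => Real.log (inducedMetric τ (k + 1) x y)) x y =
      mixedDeriv (fun x y => Real.log (τ (k + 1) x y)) x y +
        mixedDeriv (fun x y => Real.log (τ (k + 3) x y)) x y -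
        2 * mixedDeriv (fun x y => Real.log (τ (k + 2) x y)) x y :=
    mixedDeriv_log_mul_div_sq (hsmooth _ h₁) (hsmooth _ h₂) (hsmooth _ h₃)
      (hne _ h₁) (hne _ h₂) (hne _ h₃)
  rw [htoda k (by simp), htoda (k + 1) (by simp), htoda (k + 2) (by simp)] at hsecond
  linear_combination -hsecond

/-- infinitesimal Plücker formulae: if the positive smooth functions
τ_0 = 1, τ_1, …, τ_m satisfy the 2D Toda equations
∂_x∂_y ln τ_{j+1} = τ_j τ_{j+2}/τ_{j+1}², then the induced metrics
g^{(k)} = τ_k τ_{k+2}/τ_{k+1}² of the associated surfaces satisfy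
−∂_x∂_y ln g^{(k)} = −g^{(k+1)} + 2 g^{(k)} − g^{(k−1)} for 1 ≤ k ≤ m−3. -/
theorem stmt11 (m : ℕ) (τ : ℕ → ℝ → ℝ → ℝ)
    (hsmooth : ∀ j ≤ m, ContDiff ℝ (⊤ : ℕ∞) fun p : ℝ × ℝ => τ j p.1 p.2)
    (hpos : ∀ j ≤ m, ∀ x y : ℝ, 0 < τ j x y)
    (h0 : ∀ x y : ℝ, τ 0 x y = 1)
    (htoda : ∀ j : ℕ, j + 2 ≤ m → ∀ x y : ℝ,
      deriv (fun x' => deriv (fun y' => Real.log (τ (j + 1) x' y')) y) x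
        = τ j x y * τ (j + 2) x y / (τ (j + 1) x y) ^ 2) :
    ∀ k : ℕ, 1 ≤ k → k + 3 ≤ m → ∀ x y : ℝ,
      -(deriv (fun x' => deriv (fun y' =>
          Real.log (τ k x' y' * τ (k + 2) x' y' / (τ (k + 1) x' y') ^ 2)) y) x)
        = -(τ (k + 1) x y * τ (k + 3) x y / (τ (k + 2) x y) ^ 2)
          + 2 * (τ k x y * τ (k + 2) x y / (τ (k + 1) x y) ^ 2)
          - τ (k - 1) x y * τ (k + 1) x y / (τ k x y) ^ 2 := by
  rintro _ hk hkm x y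
  obtain ⟨k, rfl⟩ := Nat.exists_eq_add_of_le' hk
  exact stmt11_general
    (fun j hj => ((hsmooth j (hj.2.trans (by omega))).of_le (by norm_cast)).contDiffAt)
    (fun j hj => (hpos j (hj.2.trans (by omega)) x y).ne')
    (fun j hj => htoda j (by have := hj.2; omega) x y)
end

section
/- Liouville solutions (Proposition 'Liouville solutions'): let f, g : ℂ → ℂ be entire functions. Define G(z,w) = f′(z)·g′(w)/(1 + f(z)·g(w))² at all points (z,w) ∈ ℂ² where 1 + f(z)g(w) ≠ 0. Then at every such point, G·∂_z∂_w G − (∂_z G)·(∂_w G) = −2·G³. (Equivalently, wherever G ≠ 0, ∂_z∂_w ln G = −2G: the induced metric of a W-surface in CP¹ satisfies Liouville's equation.) -/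
open scoped BigOperators

open scoped Topology

/-!
Away from its zeros, `F * ∂_z∂_w F - ∂_z F * ∂_w F` equals `F² ∂_z∂_w log F`. It therefore inherits
rules from the logarithm: a separable factor `a(z) b(w)` only rescales it by `(a b)²`, and passing
to `Fⁿ` multiplies it by `n F²ⁿ⁻²`. On `H = 1 + f g` the expression collapses to `f' g'`, and so on
`G = f' g' H⁻²` it takes the value `(f' g')² · (-2) H⁻⁶ · f' g' = -2 G³`.
-/

section Hirota

variable {𝕜 : Type*} [NontriviallyNormedField 𝕜]

/-- Hirota's bilinear expression `½ D_z D_w F · F = F ∂_z∂_w F - ∂_z F ∂_w F`, the division-free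
form of `F² ∂_z∂_w log F`. The mixed derivative is taken first in `w`, then in `z`. -/
noncomputable def hirota (F : 𝕜 → 𝕜 → 𝕜) (z w : 𝕜) : 𝕜 :=
  F z w * deriv (fun x => deriv (F x) w) z - deriv (fun x => F x w) z * deriv (F z) w

/-- The existence at `(z, w)` of the derivatives `∂_z F`, `∂_w F` and `∂_z∂_w F` that enter
`hirota F z w`. For `∂_z∂_w F` to be meaningful, `∂_w F` has to exist at `(x, w)` for all `x`
near `z`. -/
structure MixedDifferentiableAt (F : 𝕜 → 𝕜 → 𝕜) (z w : 𝕜) : Prop where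
  left : DifferentiableAt 𝕜 (fun x => F x w) z
  right : ∀ᶠ x in 𝓝 z, DifferentiableAt 𝕜 (F x) w
  mixed : DifferentiableAt 𝕜 (fun x => deriv (F x) w) z

variable {F K : 𝕜 → 𝕜 → 𝕜} {a b : 𝕜 → 𝕜} {z w : 𝕜}

theorem mixedDifferentiableAt_const_add_mul (c : 𝕜) (ha : DifferentiableAt 𝕜 a z)
    (hb : DifferentiableAt 𝕜 b w) : MixedDifferentiableAt (fun x y => c + a x * b y) z w where
  left := (ha.mul_const _).const_add c
  right := .of_forall fun x => (hb.const_mul (a x)).const_add c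
  mixed := by
    simpa only [deriv_const_add, deriv_const_mul_field] using ha.mul_const (deriv b w)

theorem hirota_const_add_mul (c : 𝕜) (a b : 𝕜 → 𝕜) (z w : 𝕜) :
    hirota (fun x y => c + a x * b y) z w = c * (deriv a z * deriv b w) := by
  simp only [hirota, deriv_const_add, deriv_const_mul_field, deriv_mul_const_field]
  ring

theorem MixedDifferentiableAt.hirota_mul (hF : MixedDifferentiableAt F z w)
    (hK : MixedDifferentiableAt K z w) :
    hirota (fun x y => F x y * K x y) z w
      = K z w ^ 2 * hirota F z w + F z w ^ 2 * hirota K z w := by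
  have deriv_right : (fun x => deriv (fun y => F x y * K x y) w) =ᶠ[𝓝 z]
      fun x => deriv (F x) w * K x w + F x w * deriv (K x) w := by
    filter_upwards [hF.right, hK.right] with x hFx hKx using deriv_fun_mul hFx hKx
  have deriv_mixed : deriv (fun x => deriv (fun y => F x y * K x y) w) z = _ :=
    deriv_right.deriv_eq.trans <|
      ((hF.mixed.hasDerivAt.fun_mul hK.left.hasDerivAt).fun_add
        (hF.left.hasDerivAt.fun_mul hK.mixed.hasDerivAt)).deriv
  rw [hirota, deriv_mixed, deriv_fun_mul hF.left hK.left,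
    deriv_fun_mul hF.right.self_of_nhds hK.right.self_of_nhds, hirota, hirota]
  ring

theorem MixedDifferentiableAt.hirota_mul_mul_left (hF : MixedDifferentiableAt F z w)
    (ha : DifferentiableAt 𝕜 a z) (hb : DifferentiableAt 𝕜 b w) :
    hirota (fun x y => a x * b y * F x y) z w = (a z * b w) ^ 2 * hirota F z w := by
  have hab : MixedDifferentiableAt (fun x y => a x * b y) z w := by
    simpa only [zero_add] using mixedDifferentiableAt_const_add_mul 0 ha hb
  have hirota_ab : hirota (fun x y => a x * b y) z w = 0 := by
    simpa only [zero_add, zero_mul] using hirota_const_add_mul 0 a b z w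
  rw [hab.hirota_mul hF, hirota_ab, mul_zero, zero_add]

theorem MixedDifferentiableAt.hasDerivAt_zpow_left (hF : MixedDifferentiableAt F z w)
    (h0 : F z w ≠ 0) (n : ℤ) :
    HasDerivAt (fun x => F x w ^ n) (n * F z w ^ (n - 1) * deriv (fun x => F x w) z) z :=
  (hasDerivAt_zpow n _ (.inl h0)).comp z hF.left.hasDerivAt

theorem MixedDifferentiableAt.eventually_hasDerivAt_zpow_right (hF : MixedDifferentiableAt F z w)
    (h0 : F z w ≠ 0) (n : ℤ) :
    ∀ᶠ x in 𝓝 z, HasDerivAt (fun y => F x y ^ n) (n * F x w ^ (n - 1) * deriv (F x) w) w := by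
  filter_upwards [hF.right, hF.left.continuousAt.eventually_ne h0] with x hFx hx
  exact (hasDerivAt_zpow n _ (.inl hx)).comp w hFx.hasDerivAt

theorem MixedDifferentiableAt.hasDerivAt_deriv_zpow (hF : MixedDifferentiableAt F z w)
    (h0 : F z w ≠ 0) (n : ℤ) :
    HasDerivAt (fun x => deriv (fun y => F x y ^ n) w)
      (n * ((n - 1) * F z w ^ (n - 2) * (deriv (fun x => F x w) z * deriv (F z) w)
        + F z w ^ (n - 1) * deriv (fun x => deriv (F x) w) z)) z := by
  have deriv_right : (fun x => deriv (fun y => F x y ^ n) w) =ᶠ[𝓝 z]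
      fun x => n * F x w ^ (n - 1) * deriv (F x) w :=
    (hF.eventually_hasDerivAt_zpow_right h0 n).mono fun _ hx => hx.deriv
  have deriv_mixed :=
    ((hF.hasDerivAt_zpow_left h0 (n - 1)).const_mul (n : 𝕜)).fun_mul hF.mixed.hasDerivAt
  refine (deriv_mixed.congr_of_eventuallyEq deriv_right).congr_deriv ?_
  rw [sub_sub, one_add_one_eq_two, Int.cast_sub, Int.cast_one]
  ring

theorem MixedDifferentiableAt.zpow (hF : MixedDifferentiableAt F z w) (h0 : F z w ≠ 0) (n : ℤ) :
    MixedDifferentiableAt (fun x y => F x y ^ n) z w where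
  left := (hF.hasDerivAt_zpow_left h0 n).differentiableAt
  right := (hF.eventually_hasDerivAt_zpow_right h0 n).mono fun _ hx => hx.differentiableAt
  mixed := (hF.hasDerivAt_deriv_zpow h0 n).differentiableAt

theorem MixedDifferentiableAt.hirota_zpow (hF : MixedDifferentiableAt F z w) (h0 : F z w ≠ 0)
    (n : ℤ) :
    hirota (fun x y => F x y ^ n) z w = n * F z w ^ (2 * n - 2) * hirota F z w := by
  have zpow_sub_one : F z w ^ (n - 1) = F z w ^ (n - 2) * F z w := by
    rw [← zpow_add_one₀ h0]; congr 1; ring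
  have zpow_self : F z w ^ n = F z w ^ (n - 2) * F z w ^ 2 := by
    rw [← zpow_natCast, ← zpow_add₀ h0]; congr 1; push_cast; ring
  have zpow_two_mul_sub_two : F z w ^ (2 * n - 2) = (F z w ^ (n - 2) * F z w) ^ 2 := by
    rw [← zpow_sub_one, ← zpow_natCast, ← zpow_mul]; congr 1; push_cast; ring
  rw [hirota, (hF.hasDerivAt_deriv_zpow h0 n).deriv, (hF.hasDerivAt_zpow_left h0 n).deriv,
    (hF.eventually_hasDerivAt_zpow_right h0 n).self_of_nhds.deriv, hirota,
    zpow_self, zpow_sub_one, zpow_two_mul_sub_two]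
  ring

theorem stmt14_general {f f' g g' : 𝕜 → 𝕜} (hf : HasDerivAt f (f' z) z)
    (hf' : DifferentiableAt 𝕜 f' z) (hg : HasDerivAt g (g' w) w) (hg' : DifferentiableAt 𝕜 g' w)
    (h : 1 + f z * g w ≠ 0) :
    hirota (fun x y => f' x * g' y / (1 + f x * g y) ^ 2) z w
      = -2 * (f' z * g' w / (1 + f z * g w) ^ 2) ^ 3 := by
  have hH : MixedDifferentiableAt (fun x y => 1 + f x * g y) z w :=
    mixedDifferentiableAt_const_add_mul 1 hf.differentiableAt hg.differentiableAt
  calc hirota (fun x y => f' x * g' y / (1 + f x * g y) ^ 2) z w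
      = hirota (fun x y => f' x * g' y * (1 + f x * g y) ^ (-2 : ℤ)) z w := by
        simp only [div_eq_mul_inv, zpow_neg, zpow_ofNat]
    _ = (f' z * g' w) ^ 2 * hirota (fun x y => (1 + f x * g y) ^ (-2 : ℤ)) z w :=
        (hH.zpow h (-2)).hirota_mul_mul_left hf' hg'
    _ = (f' z * g' w) ^ 2 * (((-2 : ℤ) : 𝕜) * (1 + f z * g w) ^ (2 * (-2) - 2 : ℤ)
          * (f' z * g' w)) := by
        rw [hH.hirota_zpow h, hirota_const_add_mul, one_mul, hf.deriv, hg.deriv]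
    _ = -2 * (f' z * g' w / (1 + f z * g w) ^ 2) ^ 3 := by
        rw [Int.cast_neg, Int.cast_ofNat, show (2 * (-2) - 2 : ℤ) = -6 from rfl]
        field_simp

end Hirota

/-- Liouville solutions: for entire f, g and
G(z,w) = f′(z)g′(w)/(1 + f(z)g(w))², at every point where 1 + f(z)g(w) ≠ 0 one has
G·∂_z∂_w G − (∂_z G)(∂_w G) = −2 G³ (Liouville's equation in bilinear form). -/
theorem stmt14 (f g : ℂ → ℂ) (hf : Differentiable ℂ f) (hg : Differentiable ℂ g)
    (G : ℂ → ℂ → ℂ)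
    (hG : ∀ z w : ℂ, G z w = deriv f z * deriv g w / (1 + f z * g w) ^ 2) :
    ∀ z w : ℂ, 1 + f z * g w ≠ 0 →
      G z w * deriv (fun z' => deriv (fun w' => G z' w') w) z
        - deriv (fun z' => G z' w) z * deriv (fun w' => G z w') w
        = -2 * (G z w) ^ 3 := by
  obtain rfl : G = fun z w => deriv f z * deriv g w / (1 + f z * g w) ^ 2 := funext₂ hG
  exact fun z w => stmt14_general (hf z).hasDerivAt (hf.deriv z) (hg w).hasDerivAt (hg.deriv w)
end
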